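/- arXiv:1207.4331 — 2 statements merged into one kernel-verified Lean document; each statement's English description precedes it below -/
import Mathlib

section
/- Let T, (r_n), (s_n) be as in the context, let \mu be a positive Borel measure on \mathbb{R} for which every polynomial is integrable, let (p_n)_{n\ge 0} be a sequence of polynomials with deg p_n = n that is orthogonal with respect to \mu (i.e. \int p_n p_k d\mu = 0 whenever n \ne k), and let (\psi_i)_{i\ge 0} be polynomials with deg \psi_i = i. Set \mu_j^i = \int r_j \psi_i \, d\mu and define q_n^i(x) = \sum_{j=0}^n \mu_j^i s_{n-j}(x). Let \Omega_{m-1} = \det( \mu_{m-i}^{j-1} )_{i,j=1}^{m}, let \xi_n be the leading coefficient of p_n and \sigma_n the leading coefficient of r_n. Then for all integers n, m \ge 1 and all real x: \Omega_{m-1} \cdot \det( T^{i-1}(p_{m+j-1})(x) )_{i,j=1}^n = (-1)^{mn + \binom{m}{2}} \left( \prod_{j=0}^{n-1} \frac{\xi_{m+j}}{\sigma_{m+j}} \right) \cdot \det( q^{j-1}_{n+i-1}(x) )_{i,j=1}^m. -/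
open MeasureTheory Polynomial

lemma rot_val (N n : ℕ) (k : Fin N) : (((finRotate N) ^ n) k : ℕ) = (k + n) % N := by
  induction n with
  | zero => simp [Nat.mod_eq_of_lt k.2]
  | succ n ih =>
    rw [pow_succ', Equiv.Perm.mul_apply]
    cases N with
    | zero => exact k.elim0
    | succ N =>
      rw [finRotate_apply, Fin.val_add, ih]
      simp only [Fin.val_one', Nat.mod_add_mod, Nat.add_mod_mod, add_assoc]

lemma sign_rev (m : ℕ) : Equiv.Perm.sign (Fin.revPerm : Equiv.Perm (Fin m)) = (-1) ^ (m.choose 2) := by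
  induction m with
  | zero => rw [Subsingleton.elim (Fin.revPerm : Equiv.Perm (Fin 0)) 1]; simp
  | succ m ih =>
    have h : finRotate (m+1) * (Fin.revPerm : Equiv.Perm (Fin (m+1))) =
        Equiv.Perm.decomposeFin.symm (0, Fin.revPerm) := by
      ext i
      rw [Equiv.Perm.mul_apply, finRotate_apply]
      refine Fin.cases ?_ (fun i => ?_) i
      · simp
      · simp only [Equiv.Perm.decomposeFin_symm_apply_succ, Fin.revPerm_apply, Fin.val_add,
          Fin.val_rev, Fin.val_succ, Equiv.swap_self, Equiv.refl_apply, Fin.val_one', Nat.add_mod_mod]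
        rw [Nat.mod_eq_of_lt] <;> omega
    have h2 := congrArg Equiv.Perm.sign h
    rw [Equiv.Perm.sign_mul, Equiv.Perm.decomposeFin.symm_sign, ih, sign_finRotate] at h2
    simp only [if_true, one_mul, Nat.add_sub_cancel] at h2
    rw [Nat.choose_succ_succ' m 1, Nat.choose_one_right, pow_add, ← h2, ← mul_assoc, ← pow_add,
      Even.neg_one_pow ⟨m, rfl⟩, one_mul]

lemma sign_rot (m n : ℕ) : ((Equiv.Perm.sign ((finRotate (m+n)) ^ n) : ℤˣ) : ℤ) = (-1) ^ (m * n) := by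
  rw [map_pow, sign_finRotate, ← pow_mul]
  push_cast
  rcases Nat.even_or_odd n with h | h
  · rw [Even.neg_one_pow (h.mul_left _), Even.neg_one_pow (h.mul_left _)]
  · obtain ⟨k, rfl⟩ := h
    have : m + (2 * k + 1) - 1 = m + 2 * k := by omega
    rw [this, show (m + 2 * k) * (2 * k + 1) = m * (2 * k + 1) + 2 * (k * (2 * k + 1)) by ring,
      pow_add, pow_mul _ 2]
    simp

lemma core (m n : ℕ) (r s : ℕ → ℝ) (M c : ℕ → ℕ → ℝ) (hr0 : r 0 = 1) (hs0 : s 0 = 1)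
    (hs : ∀ n : ℕ, 1 ≤ n → ∑ j ∈ Finset.range (n + 1), s j * r (n - j) = 0)
    (hc : ∀ j k, m + j < k → c j k = 0)
    (hcM : ∀ j < n, ∀ i < m, ∑ k ∈ Finset.range (m + n), c j k * M k i = 0) :
    Matrix.det (Matrix.of fun i j : Fin m => M i j) *
      Matrix.det (Matrix.of fun i j : Fin n =>
        ∑ k ∈ Finset.range (m + n), c j k * (if (i : ℕ) ≤ k then r (k - i) else 0))
    = (-1) ^ (m * n) * (∏ j ∈ Finset.range n, c j (m + j)) *
      Matrix.det (Matrix.of fun i j : Fin m =>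
        ∑ l ∈ Finset.range (n + i + 1), M l j * s (n + i - l)) := by
  set B : Matrix (Fin (m + n)) (Fin m ⊕ Fin n) ℝ := Matrix.of fun k b =>
    Sum.elim (fun j : Fin m => M k j)
      (fun i : Fin n => if (i : ℕ) ≤ k then r (k - i) else 0) b with hB
  set C : Matrix (Fin m ⊕ Fin n) (Fin (m + n)) ℝ := Matrix.of fun b k =>
    Sum.elim (fun i : Fin m => if (i : ℕ) = k then 1 else 0)
      (fun j : Fin n => c j k) b with hC
  set S : Matrix (Fin (m + n)) (Fin (m + n)) ℝ := Matrix.of fun k l =>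
    if (l : ℕ) ≤ k then s (k - l) else 0 with hS
  let e0 : Fin m ⊕ Fin n ≃ Fin (m + n) := finSumFinEquiv
  let e1 : Fin m ⊕ Fin n ≃ Fin (m + n) := e0.trans ((finRotate (m + n)) ^ n)
  have e1l : ∀ i : Fin m, (e1 (Sum.inl i) : ℕ) = n + i := by
    intro i
    simp only [e1, e0, Equiv.trans_apply, finSumFinEquiv_apply_left, rot_val]
    rw [Nat.mod_eq_of_lt] <;> simp <;> omega
  have e1r : ∀ i : Fin n, (e1 (Sum.inr i) : ℕ) = i := by
    intro i
    simp only [e1, e0, Equiv.trans_apply, finSumFinEquiv_apply_right, rot_val]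
    simp only [Fin.val_natAdd]
    rw [show m + (i : ℕ) + n = i + (m + n) by ring, Nat.add_mod_right, Nat.mod_eq_of_lt]
    omega
  -- C part
  have hCB : C * B = Matrix.fromBlocks (Matrix.of fun i j : Fin m => M i j)
      (Matrix.of fun (i : Fin m) (j : Fin n) => if (j : ℕ) ≤ i then r (i - j) else 0) 0
      (Matrix.transpose (Matrix.of fun i j : Fin n =>
        ∑ k ∈ Finset.range (m + n), c j k * (if (i : ℕ) ≤ k then r (k - i) else 0))) := by
    ext a b
    rw [Matrix.mul_apply]
    rcases a with i | i <;> rcases b with j | j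
    · simp only [hC, hB, Matrix.of_apply, Sum.elim_inl, Matrix.fromBlocks_apply₁₁]
      rw [Fin.sum_univ_eq_sum_range (fun k => (if (i : ℕ) = k then 1 else 0) * M k j) (m + n)]
      simp; intro h; omega
    · simp only [hC, hB, Matrix.of_apply, Sum.elim_inl, Sum.elim_inr, Matrix.fromBlocks_apply₁₂]
      rw [Fin.sum_univ_eq_sum_range (fun k => (if (i : ℕ) = k then 1 else 0) *
        (if (j : ℕ) ≤ k then r (k - j) else 0)) (m + n)]
      simp only [ite_mul, one_mul, zero_mul, Finset.sum_ite_eq, Finset.mem_range]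
      rw [if_pos (by omega)]
    · simp only [hC, hB, Matrix.of_apply, Sum.elim_inl, Sum.elim_inr, Matrix.fromBlocks_apply₂₁]
      rw [Fin.sum_univ_eq_sum_range (fun k => c i k * M k j) (m + n)]
      simpa using hcM i i.2 j j.2
    · simp only [hC, hB, Matrix.of_apply, Sum.elim_inr, Matrix.fromBlocks_apply₂₂,
        Matrix.transpose_apply]
      rw [Fin.sum_univ_eq_sum_range (fun k => c i k *
        (if (j : ℕ) ≤ k then r (k - j) else 0)) (m + n)]
  have hC2 : C.submatrix id e0 = Matrix.fromBlocks 1 0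
      (Matrix.of fun (i : Fin n) (j : Fin m) => c i j)
      (Matrix.of fun (i j : Fin n) => c i (m + j)) := by
    ext a b
    rcases a with i | i <;> rcases b with j | j
    · simp [hC, e0, Matrix.one_apply, Fin.ext_iff]
    · simp [hC, e0]; omega
    · simp [hC, e0]
    · simp [hC, e0]
  have hdC : (C.submatrix id e0).det = ∏ j ∈ Finset.range n, c j (m + j) := by
    rw [hC2, Matrix.det_fromBlocks_zero₁₂, Matrix.det_one, one_mul, Matrix.det_of_isLowerTriangular,
      ← Fin.prod_univ_eq_prod_range (fun j => c j (m + j))]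
    · rfl
    · intro i j hij
      apply hc
      have : (i : ℕ) < j := hij
      omega
  have h1 : (∏ j ∈ Finset.range n, c j (m + j)) * (B.submatrix e0 id).det = 
      Matrix.det (Matrix.of fun i j : Fin m => M i j) *
      Matrix.det (Matrix.of fun i j : Fin n =>
        ∑ k ∈ Finset.range (m + n), c j k * (if (i : ℕ) ≤ k then r (k - i) else 0)) := by
    rw [← hdC, ← Matrix.det_mul, Matrix.submatrix_mul_equiv, hCB, Matrix.submatrix_id_id,
      Matrix.det_fromBlocks_zero₂₁, Matrix.det_transpose]
  -- S part
  have hdS : (S.submatrix e1 e1).det = 1 := by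
    rw [Matrix.det_submatrix_equiv_self, Matrix.det_of_isLowerTriangular]
    · simp [hS, hs0]
    · intro i j hij
      have : (i : ℕ) < j := hij
      simp [hS]; omega
  have hconv : ∀ k i : ℕ, k < m + n → 
      ∑ l ∈ Finset.range (m + n), (if l ≤ k then s (k - l) else 0) *
        (if i ≤ l then r (l - i) else 0) = if k = i then 1 else 0 := by
    intro k i hk
    by_cases hik : i ≤ k
    · have : ∑ l ∈ Finset.range (m + n), (if l ≤ k then s (k - l) else 0) *
        (if i ≤ l then r (l - i) else 0) = ∑ j ∈ Finset.range (k - i + 1), s j * r (k - i - j) := by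
        symm
        apply Finset.sum_of_injOn (fun j => k - j)
        · intro a ha b hb hab
          simp at ha hb hab
          omega
        · intro a ha
          simp at ha ⊢
          omega
        · intro l hl hl2
          simp at hl hl2
          by_cases h1 : l ≤ k
          · by_cases h2 : i ≤ l
            · exact absurd (by omega) (hl2 (k - l) (by omega))
            · simp [h2]
          · simp [h1]
        · intro a ha
          simp at ha
          rw [if_pos (by omega), if_pos (by omega)]
          congr 2 <;> omega
      rw [this]
      by_cases h : k = i
      · subst h; simp [hs0, hr0]
      · rw [if_neg h, hs _ (by omega)]
    · rw [if_neg (by omega)]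
      apply Finset.sum_eq_zero
      intro l _
      by_cases h1 : l ≤ k
      · rw [if_neg (by omega : ¬ i ≤ l), mul_zero]
      · rw [if_neg h1, zero_mul]
  have hq : ∀ k i : ℕ, k < m + n → 
      ∑ l ∈ Finset.range (m + n), (if l ≤ k then s (k - l) else 0) * M l i
        = ∑ l ∈ Finset.range (k + 1), M l i * s (k - l) := by
    intro k i hk
    symm
    apply Finset.sum_subset_zero_on_sdiff
    · intro a; simp; omega
    · intro a; simp; intro _ h h2; omega
    · intro a ha
      simp at ha
      rw [if_pos (by omega), mul_comm]
  have hSB : (S * B).submatrix e1 id = Matrix.fromBlocks (Matrix.of fun i j : Fin m =>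
        ∑ l ∈ Finset.range (n + i + 1), M l j * s (n + i - l)) 0
      (Matrix.of fun (i : Fin n) (j : Fin m) =>
        ∑ l ∈ Finset.range (i + 1), M l j * s (i - l)) 1 := by
    ext a b
    rw [Matrix.submatrix_apply, Matrix.mul_apply]
    rcases b with j | j
    · simp only [hS, hB, Matrix.of_apply, Sum.elim_inl, id]
      rw [Fin.sum_univ_eq_sum_range (fun l => (if l ≤ (e1 a : ℕ) then s (e1 a - l) else 0) * M l j),
        hq _ _ (e1 a).2]
      rcases a with i | i
      · rw [e1l]; rfl
      · rw [e1r]; rfl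
    · simp only [hS, hB, Matrix.of_apply, Sum.elim_inr, id]
      rw [Fin.sum_univ_eq_sum_range (fun l => (if l ≤ (e1 a : ℕ) then s (e1 a - l) else 0) *
        (if (j : ℕ) ≤ l then r (l - j) else 0)), hconv _ _ (e1 a).2]
      rcases a with i | i
      · rw [e1l, if_neg (by omega)]; rfl
      · rw [e1r]; simp [Matrix.one_apply, Fin.ext_iff]
  have h2 : (B.submatrix e1 id).det = Matrix.det (Matrix.of fun i j : Fin m =>
        ∑ l ∈ Finset.range (n + i + 1), M l j * s (n + i - l)) := by
    have := Matrix.det_mul (S.submatrix e1 e1) (B.submatrix e1 id)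
    rw [hdS, one_mul, Matrix.submatrix_mul_equiv, hSB, Matrix.det_fromBlocks_zero₁₂,
      Matrix.det_one, mul_one] at this
    exact this.symm
  have h3 : (B.submatrix e1 id).det = (-1) ^ (m * n) * (B.submatrix e0 id).det := by
    have : B.submatrix e1 id = (B.submatrix e0 id).submatrix
        (e0.symm.permCongr ((finRotate (m + n)) ^ n)) id := by
      ext a b
      simp [e1, Equiv.permCongr_apply]
    rw [this, Matrix.det_permute, Equiv.Perm.sign_permCongr, sign_rot]
    simp
  rw [← h1, ← h2, h3]
  have : ((-1 : ℝ) ^ (m * n)) * (-1) ^ (m * n) = 1 := by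
    rw [← mul_pow]; simp
  linear_combination (-(∏ j ∈ Finset.range n, c j (m + j)) * (B.submatrix e0 id).det) * this

lemma expand (r : ℕ → ℝ[X]) (hrdeg : ∀ n : ℕ, (r n).degree = (n : ℕ)) (N : ℕ) :
    ∀ f : ℝ[X], f.degree ≤ (N : ℕ) → ∃ c : ℕ → ℝ, (∀ k, N < k → c k = 0) ∧
      c N = f.coeff N / (r N).leadingCoeff ∧
      ∀ K, N < K → f = ∑ k ∈ Finset.range K, c k • r k := by
  have hlc : ∀ n, (r n).coeff n = (r n).leadingCoeff := fun n => by
    rw [leadingCoeff, natDegree_eq_of_degree_eq_some (hrdeg n)]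
  have hne : ∀ n, (r n).leadingCoeff ≠ 0 := fun n => by
    rw [leadingCoeff_ne_zero]
    intro h
    have := hrdeg n
    simp [h] at this
  suffices H : ∀ f : ℝ[X], f.degree ≤ (N : ℕ) → ∃ c : ℕ → ℝ, (∀ k, N < k → c k = 0) ∧
      c N = f.coeff N / (r N).leadingCoeff ∧ f = ∑ k ∈ Finset.range (N + 1), c k • r k by
    intro f hf
    obtain ⟨c, h1, h2, h3⟩ := H f hf
    refine ⟨c, h1, h2, fun K hK => ?_⟩
    rw [h3]
    apply Finset.sum_subset
    · intro a; simp; omega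
    · intro a _ ha
      simp at ha
      rw [h1 a (by omega), zero_smul]
  induction N with
  | zero =>
    intro f hf
    refine ⟨fun k => if k = 0 then f.coeff 0 / (r 0).leadingCoeff else 0, ?_, by simp, ?_⟩
    · intro k hk; simp; omega
    · have h0 : r 0 = C ((r 0).leadingCoeff) := by
        rw [← hlc]; exact eq_C_of_degree_le_zero (hrdeg 0).le
      rw [eq_C_of_degree_le_zero hf]
      simp only [zero_add, Finset.sum_range_one, if_true, coeff_C_zero]
      conv_rhs => rw [h0]
      rw [leadingCoeff_C, smul_C, smul_eq_mul, div_mul_cancel₀ _ (hne 0)]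
  | succ N ih =>
    intro f hf
    set a := f.coeff (N + 1) / (r (N + 1)).leadingCoeff with ha
    have hg : (f - a • r (N + 1)).degree ≤ (N : ℕ) := by
      rw [degree_le_iff_coeff_zero]
      intro k hk
      have hk : N < k := by exact_mod_cast hk
      rcases eq_or_lt_of_le (Nat.succ_le_of_lt hk) with h | h
      · rw [← h, coeff_sub, coeff_smul, Nat.succ_eq_add_one, hlc, ha, smul_eq_mul,
          div_mul_cancel₀ _ (hne _), sub_self]
      · rw [coeff_sub, coeff_smul, coeff_eq_zero_of_degree_lt, coeff_eq_zero_of_degree_lt]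
        · simp
        · rw [hrdeg]; exact_mod_cast h
        · exact lt_of_le_of_lt hf (by exact_mod_cast h)
    obtain ⟨c, h1, _, h3⟩ := ih _ hg
    refine ⟨fun k => if k = N + 1 then a else c k, ?_, by simp, ?_⟩
    · intro k hk
      simp only
      rw [if_neg (by omega), h1 k (by omega)]
    · simp only [Finset.sum_range_succ _ (N + 1), if_true]
      rw [← sub_eq_iff_eq_add]
      rw [h3]
      apply Finset.sum_congr rfl
      intro k hk
      simp at hk
      rw [if_neg (by omega)]



/-- the main theorem for a measure: a Wronskian-type determinant
of orthogonal polynomials with respect to a lowering operator `T` equals, up to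
explicit constants, a determinant of the polynomials `q_n^i`. -/
theorem wronskian_type_det_orthogonal
    (T : Module.End ℝ (Polynomial ℝ))
    (hTC : ∀ c : ℝ, T (Polynomial.C c) = 0)
    (hTdeg : ∀ f : Polynomial ℝ, 0 < f.natDegree →
      (T f).degree = ((f.natDegree - 1 : ℕ) : WithBot ℕ))
    (r s : ℕ → Polynomial ℝ)
    (hr0 : r 0 = 1) (hrdeg : ∀ n : ℕ, (r n).degree = (n : ℕ))
    (hrT : ∀ n : ℕ, 1 ≤ n → T (r n) = r (n - 1))
    (hs0 : s 0 = 1)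
    (hs : ∀ n : ℕ, 1 ≤ n → ∑ j ∈ Finset.range (n + 1), s j * r (n - j) = 0)
    (μ : Measure ℝ)
    (hint : ∀ f : Polynomial ℝ, Integrable (fun x => f.eval x) μ)
    (p : ℕ → Polynomial ℝ) (hpdeg : ∀ n : ℕ, (p n).degree = (n : ℕ))
    (hporth : ∀ n k : ℕ, n ≠ k → ∫ x, (p n).eval x * (p k).eval x ∂μ = 0)
    (ψ : ℕ → Polynomial ℝ) (hψdeg : ∀ i : ℕ, (ψ i).degree = (i : ℕ))
    (M : ℕ → ℕ → ℝ)
    (hM : ∀ j i : ℕ, M j i = ∫ x, (r j).eval x * (ψ i).eval x ∂μ)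
    (q : ℕ → ℕ → Polynomial ℝ)
    (hq : ∀ n i : ℕ, q n i = ∑ j ∈ Finset.range (n + 1), Polynomial.C (M j i) * s (n - j)) :
    ∀ n m : ℕ, 1 ≤ n → 1 ≤ m → ∀ x : ℝ,
      Matrix.det (Matrix.of fun i j : Fin m => M (m - 1 - (i : ℕ)) (j : ℕ)) *
        Matrix.det (Matrix.of fun i j : Fin n =>
          ((T ^ (i : ℕ)) (p (m + (j : ℕ)))).eval x)
      = (-1 : ℝ) ^ (m * n + m.choose 2) *
        (∏ j ∈ Finset.range n, (p (m + j)).leadingCoeff / (r (m + j)).leadingCoeff) *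
        Matrix.det (Matrix.of fun i j : Fin m => (q (n + (i : ℕ)) (j : ℕ)).eval x) := by
  intro n m hn hm x
  have hTpow : ∀ i k : ℕ, (T ^ i) (r k) = if i ≤ k then r (k - i) else 0 := by
    intro i
    induction i with
    | zero => intro k; simp
    | succ i ih =>
      intro k
      rw [pow_succ, Module.End.mul_apply]
      cases k with
      | zero =>
        have : T (r 0) = 0 := by rw [hr0]; simpa using hTC 1
        rw [this]; simp
      | succ k =>
        rw [hrT _ (by omega), Nat.add_sub_cancel, ih]
        simp
  let Λ : ℝ[X] →ₗ[ℝ] ℝ :=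
    { toFun := fun f => ∫ x, f.eval x ∂μ
      map_add' := fun f g => by
        simp only [eval_add]
        exact integral_add (hint f) (hint g)
      map_smul' := fun a f => by
        simp only [eval_smul, smul_eq_mul, RingHom.id_apply]
        exact integral_const_mul a _ }
  have hΛ : ∀ f g : ℝ[X], ∫ x, f.eval x * g.eval x ∂μ = Λ (f * g) := by
    intro f g
    simp [Λ]
  have horth : ∀ a i : ℕ, i < a → Λ (p a * ψ i) = 0 := by
    intro a i hia
    obtain ⟨d, -, -, h3⟩ := expand p hpdeg i (ψ i) (hψdeg i).le
    rw [h3 (i + 1) (by omega), Finset.mul_sum, map_sum]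
    apply Finset.sum_eq_zero
    intro k hk
    simp at hk
    rw [mul_smul_comm, map_smul, ← hΛ, hporth a k (by omega), smul_zero]
  choose c hc1 hc2 hc3 using fun j => expand r hrdeg (m + j) (p (m + j)) (hpdeg (m + j)).le
  have key := core m n (fun k => (r k).eval x) (fun k => (s k).eval x) M c (by simp [hr0])
    (by simp [hs0])
    (by
      intro k hk
      have := congrArg (Polynomial.eval x) (hs k hk)
      simpa [eval_finset_sum] using this)
    hc1
    (by
      intro j hj i hi
      have := horth (m + j) i (by omega)
      rw [hc3 j (m + n) (by omega), Finset.sum_mul, map_sum] at this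
      rw [← this]
      apply Finset.sum_congr rfl
      intro k _
      rw [hM, hΛ, smul_mul_assoc, map_smul, smul_eq_mul])
  have hΩ : Matrix.det (Matrix.of fun i j : Fin m => M (m - 1 - (i : ℕ)) (j : ℕ)) =
      (-1) ^ (m.choose 2) * Matrix.det (Matrix.of fun i j : Fin m => M i j) := by
    have : (Matrix.of fun i j : Fin m => M (m - 1 - (i : ℕ)) (j : ℕ)) =
        (Matrix.of fun i j : Fin m => M i j).submatrix Fin.revPerm id := by
      ext i j
      simp only [Matrix.of_apply, Matrix.submatrix_apply, Fin.revPerm_apply, Fin.val_rev, id]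
      congr 1
      omega
    rw [this, Matrix.det_permute, sign_rev]
    simp
  have hW : (Matrix.of fun i j : Fin n => ((T ^ (i : ℕ)) (p (m + (j : ℕ)))).eval x) =
      Matrix.of fun i j : Fin n => ∑ k ∈ Finset.range (m + n),
        c j k * (if (i : ℕ) ≤ k then (r (k - i)).eval x else 0) := by
    ext i j
    simp only [Matrix.of_apply]
    rw [hc3 j (m + n) (by omega), map_sum, eval_finset_sum]
    apply Finset.sum_congr rfl
    intro k _
    rw [map_smul, eval_smul, smul_eq_mul, hTpow]
    split_ifs <;> simp
  have hQ : (Matrix.of fun i j : Fin m => (q (n + (i : ℕ)) (j : ℕ)).eval x) =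
      Matrix.of fun i j : Fin m =>
        ∑ l ∈ Finset.range (n + i + 1), M l j * (s (n + i - l)).eval x := by
    ext i j
    simp [hq, eval_finset_sum]
  have hP : ∏ j ∈ Finset.range n, (p (m + j)).leadingCoeff / (r (m + j)).leadingCoeff =
      ∏ j ∈ Finset.range n, c j (m + j) := by
    apply Finset.prod_congr rfl
    intro j _
    rw [hc2, leadingCoeff, natDegree_eq_of_degree_eq_some (hpdeg (m + j))]
  rw [hΩ, hW, hQ, hP, mul_assoc, key, pow_add]
  ring
end

section
/- For a real number u and a natural number k, define the polynomial r_k^u(x) = (-x)_k (x+u)_k / k!. Then for all natural numbers k, l with 0 \le l \le k, all real u and all real x: \Delta^l r_k^u(x) = (-1)^l \sum_{j=0}^{\lfloor l/2 \rfloor} \frac{(-1)^j}{j!} (l+1-2j)_{2j} \, (2x+u+l)_{l-2j} \, r^{u+l-j}_{k-l+j}(x). -/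
/-- The Pochhammer symbol `(y)_l = y (y+1) ⋯ (y+l-1)`. -/
noncomputable def poch (y : ℝ) (l : ℕ) : ℝ := ∏ k ∈ Finset.range l, (y + k)

/-- The forward difference operator `Δ f (x) = f (x+1) - f x`. -/
noncomputable def fdiff (g : ℝ → ℝ) : ℝ → ℝ := fun x => g (x + 1) - g x

/-- The polynomial `r_k^u(x) = (-x)_k (x+u)_k / k!`. -/
noncomputable def rpol (u : ℝ) (k : ℕ) (x : ℝ) : ℝ :=
  poch (-x) k * poch (x + u) k / k.factorial

lemma poch_zero' (y : ℝ) : poch y 0 = 1 := by simp [poch]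

lemma poch_succ' (y : ℝ) (l : ℕ) : poch y (l + 1) = poch y l * (y + l) := by
  simp [poch, Finset.prod_range_succ]

lemma poch_succ_left (y : ℝ) (l : ℕ) : poch y (l + 1) = y * poch (y + 1) l := by
  simp only [poch, Finset.prod_range_succ']
  rw [mul_comm]
  congr 1
  · simp
  · apply Finset.prod_congr rfl
    intro i _
    push_cast
    ring

lemma poch_desc (l : ℕ) (i : ℕ) :
    poch ((l : ℝ) + 1 - i) i = (l.descFactorial i : ℝ) := by
  induction i with
  | zero => simp [poch]
  | succ i ih =>
    rw [poch_succ_left, Nat.descFactorial_succ]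
    have e : (l : ℝ) + 1 - ((i + 1 : ℕ) : ℝ) + 1 = (l : ℝ) + 1 - i := by push_cast; ring
    rw [e, ih]
    rcases lt_or_ge l i with h | h
    · simp [Nat.descFactorial_of_lt h]
    · push_cast [Nat.cast_sub h]
      ring

lemma rpol_diff (k : ℕ) (u : ℝ) :
    fdiff (rpol u (k + 1)) = fun x => (2 * x + (-(-(u + 1)))) * (-1 * rpol (u + 1) k x) := by
  funext x
  simp only [fdiff, rpol]
  rw [poch_succ_left (-(x + 1)) k, poch_succ' (-x) k, poch_succ' (x + 1 + u) k,
    poch_succ_left (x + u) k]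
  have e1 : -(x + 1) + 1 = -x := by ring
  have e2 : x + 1 + u = x + (u + 1) := by ring
  have e3 : x + u + 1 = x + (u + 1) := by ring
  rw [e1, e2, e3, Nat.factorial_succ]
  have h1 : ((k : ℝ) + 1) ≠ 0 := by positivity
  have h2 : (k.factorial : ℝ) ≠ 0 := by positivity
  push_cast
  field_simp
  ring

lemma fdiff_leibniz (a : ℝ) (f : ℝ → ℝ) (n : ℕ) :
    fdiff^[n + 1] (fun x => (2 * x + a) * f x) =
      fun x => (2 * x + a + 2 * (n + 1)) * fdiff^[n + 1] f x + 2 * (n + 1) * fdiff^[n] f x := by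
  induction n with
  | zero =>
    funext x
    simp [fdiff]
    ring
  | succ n ih =>
    rw [Function.iterate_succ_apply', ih]
    funext x
    rw [Function.iterate_succ_apply' fdiff (n + 1) f]
    have h : fdiff^[n + 1] f x = fdiff^[n] f (x + 1) - fdiff^[n] f x := by
      rw [Function.iterate_succ_apply']; rfl
    simp only [fdiff] at h ⊢
    push_cast
    linear_combination (-2 * ((n : ℝ) + 1)) * h

lemma fdiff_neg_iter (f : ℝ → ℝ) (n : ℕ) :
    fdiff^[n] (fun x => -1 * f x) = fun x => -1 * fdiff^[n] f x := by
  induction n with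
  | zero => rfl
  | succ n ih =>
    rw [Function.iterate_succ_apply', ih, Function.iterate_succ_apply']
    funext x
    simp only [fdiff]
    ring

noncomputable def cc (l j : ℕ) : ℝ := ((-1 : ℝ) ^ j / j.factorial) * (l.descFactorial (2 * j) : ℝ)

lemma cc_zero (l j : ℕ) (h : l < 2 * j) : cc l j = 0 := by
  simp [cc, Nat.descFactorial_of_lt h]

lemma key (n j : ℕ) (y : ℝ) :
    cc (n + 2) (j + 1) * poch y (n + 2 - 2 * (j + 1)) =
      (y + n + 1) * (cc (n + 1) (j + 1) * poch y (n + 1 - 2 * (j + 1)))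
        - 2 * (n + 1) * (cc n j * poch (y - 1) (n - 2 * j)) := by
  have a1 : ((n + 2).descFactorial (2 * (j + 1)) : ℝ)
      = (n + 2) * (n + 1) * n.descFactorial (2 * j) := by
    rw [show 2 * (j + 1) = 2 * j + 1 + 1 by ring, Nat.succ_descFactorial_succ,
      Nat.succ_descFactorial_succ]
    push_cast; ring
  have a2 : ((n + 1).descFactorial (2 * (j + 1)) : ℝ)
      = (n + 1) * (((n - 2 * j : ℕ) : ℝ) * n.descFactorial (2 * j)) := by
    rw [show 2 * (j + 1) = 2 * j + 1 + 1 by ring, Nat.succ_descFactorial_succ,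
      Nat.descFactorial_succ]
    push_cast; ring
  simp only [cc]
  rw [a1, a2, Nat.factorial_succ, pow_succ]
  have h1 : ((j : ℝ) + 1) ≠ 0 := by positivity
  have h2 : (j.factorial : ℝ) ≠ 0 := by positivity
  rcases lt_trichotomy n (2 * j) with h | h | h
  · simp [Nat.descFactorial_of_lt h]
  · subst h
    rw [show 2 * j + 2 - 2 * (j + 1) = 0 by omega, show 2 * j - 2 * j = 0 by omega]
    simp only [poch_zero']
    push_cast
    field_simp
    ring
  · obtain ⟨p, rfl⟩ : ∃ p, n = 2 * j + p + 1 := ⟨n - 2 * j - 1, by omega⟩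
    rw [show 2 * j + p + 1 + 2 - 2 * (j + 1) = p + 1 by omega,
      show 2 * j + p + 1 + 1 - 2 * (j + 1) = p by omega,
      show 2 * j + p + 1 - 2 * j = p + 1 by omega, poch_succ' y p, poch_succ_left (y - 1) p,
      sub_add_cancel]
    push_cast
    field_simp
    ring

noncomputable def tt (k l : ℕ) (u x : ℝ) (j : ℕ) : ℝ :=
  cc l j * poch (2 * x + u + l) (l - 2 * j) * rpol (u + l - j) (k - l + j) x

lemma main_aux (l : ℕ) : ∀ (k : ℕ), l ≤ k → ∀ (N : ℕ), l < 2 * N → ∀ (u x : ℝ),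
    fdiff^[l] (rpol u k) x = (-1 : ℝ) ^ l * ∑ j ∈ Finset.range N, tt k l u x j := by
  induction l using Nat.strong_induction_on with
  | _ l ih =>
  intro k hk N hN u x
  obtain ⟨N, rfl⟩ : ∃ M, N = M + 1 := ⟨N - 1, by omega⟩
  rcases l with _ | _ | n
  · rw [Finset.sum_range_succ']
    have : ∀ j ∈ Finset.range N, tt k 0 u x (j + 1) = 0 := by
      intro j _
      simp [tt, cc_zero 0 (j + 1) (by omega)]
    rw [Finset.sum_eq_zero this]
    simp [tt, cc, poch]
  · obtain ⟨k, rfl⟩ : ∃ m, k = m + 1 := ⟨k - 1, by omega⟩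
    rw [Finset.sum_range_succ']
    have : ∀ j ∈ Finset.range N, tt (k + 1) 1 u x (j + 1) = 0 := by
      intro j _
      simp [tt, cc_zero 1 (j + 1) (by omega)]
    rw [zero_add, Finset.sum_eq_zero this]
    simp only [Function.iterate_one]
    rw [rpol_diff]
    simp [tt, cc, poch]
    left; ring
  · obtain ⟨k, rfl⟩ : ∃ m, k = m + 1 := ⟨k - 1, by omega⟩
    rw [show n + 1 + 1 = (n + 1) + 1 by rfl, Function.iterate_succ_apply, rpol_diff,
      fdiff_leibniz, fdiff_neg_iter, fdiff_neg_iter]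
    simp only
    rw [ih (n + 1) (by omega) k (by omega) (N + 1) (by omega) (u + 1) x,
      ih n (by omega) k (by omega) N (by omega) (u + 1) x, Finset.sum_range_succ',
      Finset.sum_range_succ' (tt (k + 1) (n + 1 + 1) u x)]
    have h0 : tt (k + 1) (n + 1 + 1) u x 0 =
        (2 * x + u + 2 * n + 3) * tt k (n + 1) (u + 1) x 0 := by
      simp only [tt, cc]
      rw [show n + 1 + 1 - 2 * 0 = n + 1 + 1 by omega, show n + 1 - 2 * 0 = n + 1 by omega,
        poch_succ', show k + 1 - (n + 1 + 1) + 0 = k - (n + 1) + 0 by omega,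
        show 2 * x + u + ((n + 1 + 1 : ℕ) : ℝ) = 2 * x + (u + 1) + ((n + 1 : ℕ) : ℝ) by
          push_cast; ring,
        show u + ((n + 1 + 1 : ℕ) : ℝ) - ((0 : ℕ) : ℝ)
          = (u + 1) + ((n + 1 : ℕ) : ℝ) - ((0 : ℕ) : ℝ) by push_cast; ring]
      simp
      ring
    have hs : ∀ j ∈ Finset.range N, tt (k + 1) (n + 1 + 1) u x (j + 1) =
        (2 * x + u + 2 * n + 3) * tt k (n + 1) (u + 1) x (j + 1)
          - 2 * (n + 1) * tt k n (u + 1) x j := by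
      intro j _
      simp only [tt]
      have hkey := key n j (2 * x + u + n + 2)
      rw [show k + 1 - (n + 1 + 1) + (j + 1) = k - n + j by omega,
        show k - (n + 1) + (j + 1) = k - n + j by omega,
        show 2 * x + u + ((n + 1 + 1 : ℕ) : ℝ) = 2 * x + u + n + 2 by push_cast; ring,
        show 2 * x + (u + 1) + ((n + 1 : ℕ) : ℝ) = 2 * x + u + n + 2 by push_cast; ring,
        show 2 * x + (u + 1) + (n : ℝ) = 2 * x + u + n + 2 - 1 by ring,
        show u + ((n + 1 + 1 : ℕ) : ℝ) - ((j + 1 : ℕ) : ℝ) = u + 1 + n - j by push_cast; ring,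
        show u + 1 + ((n + 1 : ℕ) : ℝ) - ((j + 1 : ℕ) : ℝ) = u + 1 + n - j by push_cast; ring]
      linear_combination (rpol (u + 1 + n - j) (k - n + j) x) * hkey
    rw [Finset.sum_congr rfl hs, h0, Finset.sum_sub_distrib, ← Finset.mul_sum, ← Finset.mul_sum]
    rw [pow_succ, pow_succ]
    ring

/-- the expansion of `Δ^l r_k^u` in terms of the polynomials
`r^{u+l-j}_{k-l+j}`. -/
theorem fdiff_iter_rpol (k l : ℕ) (hlk : l ≤ k) (u x : ℝ) :
    fdiff^[l] (rpol u k) x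
    = (-1 : ℝ) ^ l * ∑ j ∈ Finset.range (l / 2 + 1),
        ((-1 : ℝ) ^ j / j.factorial) * poch ((l : ℝ) + 1 - 2 * j) (2 * j) *
          poch (2 * x + u + l) (l - 2 * j) * rpol (u + l - j) (k - l + j) x := by
  rw [main_aux l k hlk (l / 2 + 1) (by omega) u x]
  congr 1
  apply Finset.sum_congr rfl
  intro j _
  have h := poch_desc l (2 * j)
  push_cast at h
  rw [h, tt, cc]
end
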